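/- arXiv:2511.01996 — 2 statements merged into one kernel-verified Lean document; each statement's English description precedes it below -/
import Mathlib

section
/- Let H be a finite-dimensional complex Hilbert space, Ŷ a self-adjoint operator on H with nondegenerate spectrum, 𝒴 the algebra of operators that are functions of Ŷ, and ρ̂ a density matrix with ⟨φ_y, ρ̂ φ_y⟩ ≠ 0 for all y ∈ σ(Ŷ). Then there exists a unique map ℰ : 𝓛(H) → 𝒴 such that (1) ℰ(X̂ f(Ŷ)) = f(Ŷ)ℰ(X̂) for every X̂ ∈ 𝓛(H) and every f : σ(Ŷ) → ℂ, and (2) Tr(ρ̂ ℰ(X̂)) = Tr(ρ̂ X̂) for every X̂ ∈ 𝓛(H); moreover this map is ℰ(X̂) = 𝔼^r_ρ̂(X̂|Ŷ) := Σ_{y∈σ(Ŷ)} (⟨φ_y, ρ̂X̂ φ_y⟩/⟨φ_y, ρ̂ φ_y⟩) Π_y. -/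
open scoped ComplexOrder
noncomputable section

variable {H : Type*} [NormedAddCommGroup H] [InnerProductSpace ℂ H] [FiniteDimensional ℂ H]

/-- The rank-one orthogonal projector onto the line spanned by a unit vector `v`. -/
def proj (v : H) : H →ₗ[ℂ] H where
  toFun w := (inner ℂ v w : ℂ) • v
  map_add' x y := by simp [inner_add_right, add_smul]
  map_smul' c x := by simp [inner_smul_right, smul_smul]

/-- The operator `f(Ŷ) = Σ_y f(y) Π_y` associated to a function `f` on the spectrum,
for an operator with orthonormal eigenbasis `φ`. -/
def opF {ι : Type*} [Fintype ι] (φ : ι → H) (f : ι → ℂ) : H →ₗ[ℂ] H :=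
  ∑ i, f i • proj (φ i)


/-- The right quantum conditional expectation
`𝔼^r_ρ̂(X̂|Ŷ) = Σ_y (⟨φ_y, ρ̂X̂ φ_y⟩/⟨φ_y, ρ̂ φ_y⟩) Π_y`. -/
def EcondR {ι : Type*} [Fintype ι] (φ : ι → H) (ρ X : H →ₗ[ℂ] H) : H →ₗ[ℂ] H :=
  ∑ i, ((inner ℂ (φ i) ((ρ ∘ₗ X) (φ i)) : ℂ) / (inner ℂ (φ i) (ρ (φ i)) : ℂ)) • proj (φ i)

/-- The characterizing properties of the right quantum conditional expectation: the map takes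
values in the algebra `𝒴` of functions of `Ŷ`, pulls functions of `Ŷ` out (from the right of
the argument), and has the iterated expectation property with respect to `ρ̂`. -/
def IsRightCondExpMap {ι : Type*} [Fintype ι] (φ : ι → H) (ρ : H →ₗ[ℂ] H)
    (E : (H →ₗ[ℂ] H) → (H →ₗ[ℂ] H)) : Prop :=
  (∀ X : H →ₗ[ℂ] H, ∃ f : ι → ℂ, E X = opF φ f) ∧
  (∀ (f : ι → ℂ) (X : H →ₗ[ℂ] H), E (X ∘ₗ opF φ f) = opF φ f ∘ₗ E X) ∧
  (∀ X : H →ₗ[ℂ] H, LinearMap.trace ℂ H (ρ ∘ₗ E X) = LinearMap.trace ℂ H (ρ ∘ₗ X))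

theorem opF_basis {ι : Type*} [Fintype ι] (φ : OrthonormalBasis ι ℂ H) (f : ι → ℂ) (i : ι) :
    opF (fun i => φ i) f (φ i) = f i • φ i := by
  classical
  simp [opF, proj, orthonormal_iff_ite.mp φ.orthonormal, LinearMap.sum_apply]

theorem EcondR_eq {ι : Type*} [Fintype ι] (φ : ι → H) (ρ X : H →ₗ[ℂ] H) :
    EcondR φ ρ X = opF φ (fun i => (inner ℂ (φ i) ((ρ ∘ₗ X) (φ i)) : ℂ) /
      (inner ℂ (φ i) (ρ (φ i)) : ℂ)) := rfl

theorem isRight_EcondR {ι : Type*} [Fintype ι] (φ : OrthonormalBasis ι ℂ H) (ρ : H →ₗ[ℂ] H)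
    (hρ : ∀ i, (inner ℂ (φ i) (ρ (φ i)) : ℂ) ≠ 0) :
    IsRightCondExpMap (fun i => φ i) ρ (fun X => EcondR (fun i => φ i) ρ X) := by
  refine ⟨fun X => ⟨_, EcondR_eq _ _ _⟩, fun f X => ?_, fun X => ?_⟩
  · apply φ.toBasis.ext
    intro i
    simp only [EcondR_eq, OrthonormalBasis.coe_toBasis, LinearMap.comp_apply, opF_basis, map_smul,
      inner_smul_right, smul_smul]
    congr 1
    ring
  · simp only [LinearMap.trace_eq_sum_inner _ φ]
    refine Finset.sum_congr rfl fun i _ => ?_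
    simp only [EcondR_eq, LinearMap.comp_apply, opF_basis, map_smul, inner_smul_right]
    exact div_mul_cancel₀ _ (hρ i)

theorem eq_EcondR {ι : Type*} [Fintype ι] (φ : OrthonormalBasis ι ℂ H) (ρ : H →ₗ[ℂ] H)
    (hρ : ∀ i, (inner ℂ (φ i) (ρ (φ i)) : ℂ) ≠ 0) (E : (H →ₗ[ℂ] H) → (H →ₗ[ℂ] H))
    (hE : IsRightCondExpMap (fun i => φ i) ρ E) :
    E = fun X => EcondR (fun i => φ i) ρ X := by
  classical
  obtain ⟨h1, h2, h3⟩ := hE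
  funext X
  obtain ⟨g, hg⟩ := h1 X
  rw [hg, EcondR_eq]
  congr 1
  funext i
  rw [eq_div_iff (hρ i)]
  have h := h3 (X ∘ₗ opF (fun i => φ i) (Pi.single i 1))
  rw [h2, hg] at h
  simp only [LinearMap.trace_eq_sum_inner _ φ, LinearMap.comp_apply, opF_basis, map_smul,
    inner_smul_right] at h
  simpa [Pi.single_apply] using h

/-- there is a unique map `ℰ : 𝓛(H) → 𝒴` with `ℰ(X̂ f(Ŷ)) = f(Ŷ)ℰ(X̂)` and
`Tr(ρ̂ ℰ(X̂)) = Tr(ρ̂ X̂)`; it is `X̂ ↦ 𝔼^r_ρ̂(X̂|Ŷ)`. -/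
theorem stmt7 {ι : Type*} [Fintype ι] (φ : OrthonormalBasis ι ℂ H)
    (Y : H →ₗ[ℂ] H) (y : ι → ℝ) (hy : Function.Injective y)
    (hY : ∀ i, Y (φ i) = (y i : ℂ) • φ i)
    (ρ : H →ₗ[ℂ] H) (hpos : ∀ v, 0 ≤ (inner ℂ v (ρ v) : ℂ))
    (htr : LinearMap.trace ℂ H ρ = 1)
    (hρ : ∀ i, (inner ℂ (φ i) (ρ (φ i)) : ℂ) ≠ 0) :
    (∃! E : (H →ₗ[ℂ] H) → (H →ₗ[ℂ] H), IsRightCondExpMap (fun i => φ i) ρ E) ∧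
    (∀ E : (H →ₗ[ℂ] H) → (H →ₗ[ℂ] H), IsRightCondExpMap (fun i => φ i) ρ E →
      E = fun X => EcondR (fun i => φ i) ρ X) := by
  exact ⟨⟨_, isRight_EcondR φ ρ hρ, fun E hE => eq_EcondR φ ρ hρ E hE⟩, eq_EcondR φ ρ hρ⟩
end
end

section
/- Let H be a finite-dimensional complex Hilbert space, Â and B̂ self-adjoint operators with nondegenerate spectra satisfying ⟨φ_a^Â, φ_b^B̂⟩ ≠ 0 for all (a,b), and let (S_{a,b}) be a Born-compatible frame for Â and B̂ forming a basis of 𝓛(H), with dual frame (T_{a,b}) and associated quasiprobability representation (Q, Q̃). Then the Q-conditional expectation satisfies the left pull-through property 𝔼^Q_ρ̂(f(B̂)X̂|B̂) = f(B̂) 𝔼^Q_ρ̂(X̂|B̂) for all density matrices ρ̂ with ⟨φ_b^B̂, ρ̂ φ_b^B̂⟩ ≠ 0 (∀b), all X̂ ∈ 𝓛(H), and all f : σ(B̂) → ℂ, if and only if S_{a,b} = Π_a^Â Π_b^B̂ for all (a,b), i.e., (Q, Q̃) is the left Kirkwood-Dirac representation. -/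
open scoped ComplexOrder
noncomputable section

variable {H : Type*} [NormedAddCommGroup H] [InnerProductSpace ℂ H] [FiniteDimensional ℂ H]

/-- The `Q`-conditional expectation
`𝔼^Q_ρ̂(X̂|B̂) = Σ_{(a,b)} conj(Q̃_{a,b}(X̂†)) (Q_{a,b}(ρ̂)/⟨φ_b^B̂, ρ̂ φ_b^B̂⟩) Π_b^B̂`,
where `Q_{a,b}(ρ̂) = Tr(ρ̂ S†_{a,b})` and `Q̃_{a,b}(X̂) = Tr(X̂ T†_{a,b})`. -/
def QcondExp {ιA ιB : Type*} [Fintype ιA] [Fintype ιB] (φB : ιB → H)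
    (S T : ιA × ιB → (H →ₗ[ℂ] H)) (ρ X : H →ₗ[ℂ] H) : H →ₗ[ℂ] H :=
  ∑ p : ιA × ιB,
    ((starRingEnd ℂ)
        (LinearMap.trace ℂ H (LinearMap.adjoint X ∘ₗ LinearMap.adjoint (T p))) *
      (LinearMap.trace ℂ H (ρ ∘ₗ LinearMap.adjoint (S p)) /
        (inner ℂ (φB p.2) (ρ (φB p.2)) : ℂ))) • proj (φB p.2)

theorem proj_apply' (v w : H) : proj v w = (inner ℂ v w : ℂ) • v := rfl

theorem comp_sum' {ι : Type*} [Fintype ι] (Y : H →ₗ[ℂ] H) (g : ι → (H →ₗ[ℂ] H)) :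
    Y ∘ₗ (∑ i, g i) = ∑ i, Y ∘ₗ g i :=
  Finset.mul_sum (R := Module.End ℂ H) Finset.univ g Y

theorem adjoint_proj' (v : H) : LinearMap.adjoint (proj v) = proj v := by
  symm
  rw [LinearMap.eq_adjoint_iff]
  intro x y
  simp only [proj_apply', inner_smul_left, inner_smul_right, inner_conj_symm]
  ring

theorem trace_adj' {ι : Type*} [Fintype ι] (φ : OrthonormalBasis ι ℂ H) (X : H →ₗ[ℂ] H) :
    (starRingEnd ℂ) (LinearMap.trace ℂ H (LinearMap.adjoint X)) = LinearMap.trace ℂ H X := by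
  rw [LinearMap.trace_eq_sum_inner _ φ, LinearMap.trace_eq_sum_inner _ φ, map_sum]
  refine Finset.sum_congr rfl fun i _ => ?_
  rw [inner_conj_symm, LinearMap.adjoint_inner_left]

theorem opF_apply' {ι : Type*} [Fintype ι] [DecidableEq ι] (φ : OrthonormalBasis ι ℂ H)
    (f : ι → ℂ) (b : ι) : opF (fun b => φ b) f (φ b) = f b • φ b := by
  simp [opF, proj_apply', LinearMap.sum_apply, OrthonormalBasis.inner_eq_ite]

theorem Q_apply' {ιA ιB : Type*} [Fintype ιA] [Fintype ιB] [DecidableEq ιB]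
    (φB : OrthonormalBasis ιB ℂ H)
    (S T : ιA × ιB → (H →ₗ[ℂ] H)) (ρ X : H →ₗ[ℂ] H) (b : ιB) :
    QcondExp (fun b => φB b) S T ρ X (φB b) =
      (∑ a, LinearMap.trace ℂ H (T (a, b) ∘ₗ X) *
        (LinearMap.trace ℂ H (ρ ∘ₗ LinearMap.adjoint (S (a, b))) /
        (inner ℂ (φB b) (ρ (φB b)) : ℂ))) • φB b := by
  unfold QcondExp
  simp only [← LinearMap.adjoint_comp, trace_adj' φB, LinearMap.sum_apply, LinearMap.smul_apply,
    proj_apply', OrthonormalBasis.inner_eq_ite, Fintype.sum_prod_type]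
  rw [Finset.sum_smul]
  refine Finset.sum_congr rfl fun a _ => ?_
  simp

theorem trace_proj_comp' {ι : Type*} [Fintype ι] (φ : OrthonormalBasis ι ℂ H) (v : H)
    (Y : H →ₗ[ℂ] H) : LinearMap.trace ℂ H (proj v ∘ₗ Y) = inner ℂ v (Y v) := by
  rw [LinearMap.trace_comp_comm', LinearMap.trace_eq_sum_inner _ φ]
  simp only [LinearMap.comp_apply, proj_apply', map_smul, inner_smul_right]
  rw [φ.sum_inner_mul_inner]

/-- Full-rank density matrices separate operators. -/
theorem sep' {ι : Type*} [Fintype ι] (φ : OrthonormalBasis ι ℂ H) (i₀ : ι) (Y : H →ₗ[ℂ] H)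
    (h : ∀ ρ : H →ₗ[ℂ] H, (∀ v : H, 0 ≤ (inner ℂ v (ρ v) : ℂ)) →
      LinearMap.trace ℂ H ρ = 1 →
      (∀ b : ι, (inner ℂ (φ b) (ρ (φ b)) : ℂ) ≠ 0) → LinearMap.trace ℂ H (ρ ∘ₗ Y) = 0) :
    Y = 0 := by
  have key : ∀ v : H, LinearMap.trace ℂ H Y + inner ℂ v (Y v) = 0 := by
    intro v
    set c : ℝ := (Fintype.card ι + ‖v‖ ^ 2) with hc
    have hcard : 0 < Fintype.card ι := Fintype.card_pos_iff.mpr ⟨i₀⟩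
    have hcpos : 0 < c := by positivity
    have hcne : (c : ℂ) ≠ 0 := by exact_mod_cast hcpos.ne'
    have hin : ∀ w : H, (inner ℂ w ((((c⁻¹ : ℝ) : ℂ) • (LinearMap.id + proj v) : H →ₗ[ℂ] H) w) : ℂ)
        = ((c⁻¹ * (‖w‖ ^ 2 + ‖(inner ℂ v w : ℂ)‖ ^ 2) : ℝ) : ℂ) := by
      intro w
      simp only [LinearMap.smul_apply, LinearMap.add_apply, LinearMap.id_apply, proj_apply',
        inner_smul_right, inner_add_right, inner_self_eq_norm_sq_to_K]
      rw [← inner_conj_symm w v, Complex.mul_conj, Complex.normSq_eq_norm_sq]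
      push_cast
      rfl
    have htr : LinearMap.trace ℂ H (proj v) = ((‖v‖ ^ 2 : ℝ) : ℂ) := by
      have := trace_proj_comp' φ v LinearMap.id
      rw [LinearMap.comp_id] at this
      rw [this, LinearMap.id_apply, inner_self_eq_norm_sq_to_K]
      push_cast
      rfl
    have := h (((c⁻¹ : ℝ) : ℂ) • (LinearMap.id + proj v)) ?_ ?_ ?_
    · rw [LinearMap.smul_comp, LinearMap.add_comp, LinearMap.id_comp, map_smul, map_add,
        trace_proj_comp' φ, smul_eq_mul] at this
      rcases mul_eq_zero.mp this with h0 | h0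
      · exact absurd h0 (by exact_mod_cast (inv_pos.mpr hcpos).ne')
      · exact h0
    · intro w
      rw [hin]
      have : 0 ≤ c⁻¹ * (‖w‖ ^ 2 + ‖(inner ℂ v w : ℂ)‖ ^ 2) := by positivity
      exact_mod_cast this
    · rw [map_smul, map_add, htr, LinearMap.trace_id, Module.finrank_eq_card_basis φ.toBasis,
        smul_eq_mul]
      have : ((Fintype.card ι : ℂ) + ((‖v‖ ^ 2 : ℝ) : ℂ)) = (c : ℂ) := by
        rw [hc]; push_cast; rfl
      rw [this]
      push_cast
      exact inv_mul_cancel₀ hcne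
    · intro b
      rw [hin]
      have : 0 < c⁻¹ * (‖φ b‖ ^ 2 + ‖(inner ℂ v (φ b) : ℂ)‖ ^ 2) := by
        rw [φ.norm_eq_one]; positivity
      exact_mod_cast this.ne'
  have h0 : LinearMap.trace ℂ H Y = 0 := by simpa using key 0
  rw [← inner_map_self_eq_zero]
  intro v
  have := key v
  rw [h0, zero_add] at this
  rw [← inner_conj_symm, this, map_zero]

/-- for a Born-compatible frame `(S_{a,b})` (a basis of `𝓛(H)`, with dual frame
`(T_{a,b})`), the associated `Q`-conditional expectation satisfies the left pull-through
property `𝔼^Q_ρ̂(f(B̂)X̂|B̂) = f(B̂)𝔼^Q_ρ̂(X̂|B̂)` for all admissible states `ρ̂`, operators `X̂`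
and functions `f`, if and only if `S_{a,b} = Π_a^Â Π_b^B̂` for all `(a,b)`, i.e. `(Q,Q̃)` is
the left Kirkwood-Dirac representation. -/
theorem stmt17 {ιA ιB : Type*} [Fintype ιA] [Fintype ιB] [DecidableEq ιA] [DecidableEq ιB]
    (φA : OrthonormalBasis ιA ℂ H) (φB : OrthonormalBasis ιB ℂ H)
    (A B : H →ₗ[ℂ] H) (α : ιA → ℝ) (β : ιB → ℝ)
    (hα : Function.Injective α) (hβ : Function.Injective β)
    (hA : ∀ a, A (φA a) = (α a : ℂ) • φA a) (hB : ∀ b, B (φB b) = (β b : ℂ) • φB b)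
    (hAB : ∀ (a : ιA) (b : ιB), (inner ℂ (φA a) (φB b) : ℂ) ≠ 0)
    (S T : ιA × ιB → (H →ₗ[ℂ] H))
    (hBornB : ∀ b₀ : ιB, ∑ a : ιA, LinearMap.adjoint (S (a, b₀)) = proj (φB b₀))
    (hBornA : ∀ a₀ : ιA, ∑ b : ιB, LinearMap.adjoint (S (a₀, b)) = proj (φA a₀))
    (hindep : LinearIndependent ℂ S)
    (hspan : Submodule.span ℂ (Set.range S) = ⊤)
    (hdual : ∀ p q : ιA × ιB,
      LinearMap.trace ℂ H (T p ∘ₗ LinearMap.adjoint (S q)) = if p = q then 1 else 0) :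
    (∀ ρ : H →ₗ[ℂ] H, (∀ v : H, 0 ≤ (inner ℂ v (ρ v) : ℂ)) →
      LinearMap.trace ℂ H ρ = 1 →
      (∀ b : ιB, (inner ℂ (φB b) (ρ (φB b)) : ℂ) ≠ 0) →
      ∀ (X : H →ₗ[ℂ] H) (f : ιB → ℂ),
        QcondExp (fun b => φB b) S T ρ (opF (fun b => φB b) f ∘ₗ X) =
          opF (fun b => φB b) f ∘ₗ QcondExp (fun b => φB b) S T ρ X) ↔
    (∀ p : ιA × ιB, S p = proj (φA p.1) ∘ₗ proj (φB p.2)) := by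
  have hind : LinearIndependent ℂ (fun p => LinearMap.adjoint (S p)) := by
    rw [Fintype.linearIndependent_iff] at hindep ⊢
    intro g hg i
    have h2 := congrArg LinearMap.adjoint hg
    simp only [map_sum, LinearMap.map_smulₛₗ, map_smulₛₗ, LinearMap.adjoint_adjoint, map_zero] at h2
    simpa using hindep _ h2 i
  -- linear functionals are determined on the adjoint frame
  have hext : ∀ L M : (H →ₗ[ℂ] H) →ₗ[ℂ] ℂ,
      (∀ q, L (LinearMap.adjoint (S q)) = M (LinearMap.adjoint (S q))) → ∀ X, L X = M X := by
    intro L M hLM X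
    have hX : LinearMap.adjoint X ∈ Submodule.span ℂ (Set.range S) := by rw [hspan]; trivial
    rw [← LinearMap.adjoint_adjoint X]
    generalize LinearMap.adjoint X = Z at hX ⊢
    induction hX using Submodule.span_induction with
    | mem x hx => obtain ⟨q, rfl⟩ := hx; exact hLM q
    | zero => simp
    | add x y _ _ hx hy => rw [map_add, map_add, map_add, hx, hy]
    | smul c x _ hx => rw [map_smulₛₗ, map_smul, map_smul, hx]
  have hzero : ∀ X : H →ₗ[ℂ] H, (∀ p, LinearMap.trace ℂ H (T p ∘ₗ X) = 0) → X = 0 := by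
    intro X hX
    have hspan' : X ∈ Submodule.span ℂ (Set.range fun p => LinearMap.adjoint (S p)) := by
      have hX : LinearMap.adjoint X ∈ Submodule.span ℂ (Set.range S) := by rw [hspan]; trivial
      rw [← LinearMap.adjoint_adjoint X]
      generalize LinearMap.adjoint X = Z at hX ⊢
      induction hX using Submodule.span_induction with
      | mem x hx => obtain ⟨q, rfl⟩ := hx; exact Submodule.subset_span ⟨q, rfl⟩
      | zero => simp
      | add x y _ _ hx hy => rw [map_add]; exact add_mem hx hy
      | smul c x _ hx => rw [map_smulₛₗ]; exact Submodule.smul_mem _ _ hx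
    obtain ⟨c, rfl⟩ := (Submodule.mem_span_range_iff_exists_fun ℂ).mp hspan'
    have hc : ∀ p, c p = 0 := by
      intro p
      have := hX p
      simpa [comp_sum', LinearMap.comp_smul, hdual] using this
    simp [hc]
  constructor
  · intro h
    have step : ∀ (p q : ιA × ιB) (f : ιB → ℂ),
        LinearMap.trace ℂ H (T p ∘ₗ (opF (fun b => φB b) f ∘ₗ LinearMap.adjoint (S q))) =
          f p.2 * if p = q then 1 else 0 := by
      rintro ⟨a₀, b⟩ q f
      set X := LinearMap.adjoint (S q) with hXdef
      set d : ιA → ℂ := fun a =>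
        LinearMap.trace ℂ H (T (a, b) ∘ₗ (opF (fun b => φB b) f ∘ₗ X)) -
          f b * LinearMap.trace ℂ H (T (a, b) ∘ₗ X) with hd
      have hY : ∑ a, d a • LinearMap.adjoint (S (a, b)) = 0 := by
        apply sep' φB b
        intro ρ h1 h2 h3
        have e := congrArg (fun L : H →ₗ[ℂ] H => L (φB b)) (h ρ h1 h2 h3 X f)
        simp only [LinearMap.comp_apply (opF (fun b => φB b) f)] at e
        rw [Q_apply', Q_apply', map_smul, opF_apply', smul_smul] at e
        have e' := smul_left_injective ℂ (φB.orthonormal.ne_zero b) e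
        have hne := h3 b
        simp only [← mul_div_assoc, ← Finset.sum_div] at e'
        rw [div_mul_eq_mul_div, div_left_inj' hne, Finset.sum_mul] at e'
        rw [comp_sum', map_sum]
        simp only [LinearMap.comp_smul, map_smul, smul_eq_mul, hd, sub_mul]
        rw [Finset.sum_sub_distrib, e', sub_eq_zero]
        exact Finset.sum_congr rfl fun a _ => by ring
      have hind' : LinearIndependent ℂ (fun a => LinearMap.adjoint (S (a, b))) :=
        hind.comp (fun a : ιA => (a, b)) (fun x y hxy => (Prod.mk.inj hxy).1)
      have := Fintype.linearIndependent_iff.mp hind' d hY a₀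
      rw [← hdual (a₀, b) q]
      exact sub_eq_zero.mp this
    have step2 : ∀ (q : ιA × ιB) (f : ιB → ℂ),
        opF (fun b => φB b) f ∘ₗ LinearMap.adjoint (S q) = f q.2 • LinearMap.adjoint (S q) := by
      intro q f
      rw [← sub_eq_zero]
      apply hzero
      intro p
      rw [LinearMap.comp_sub, map_sub, step, LinearMap.comp_smul, map_smul, hdual, smul_eq_mul]
      split_ifs with hpq
      · rw [hpq, sub_self]
      · simp
    rintro ⟨a, b⟩
    have hop : opF (fun b => φB b) (Pi.single b 1) = proj (φB b) := by
      unfold opF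
      rw [Finset.sum_eq_single b]
      · simp
      · intro c _ hc; simp [Pi.single_eq_of_ne hc]
      · simp
    have h1 : LinearMap.adjoint (S (a, b)) = proj (φB b) ∘ₗ proj (φA a) := by
      rw [← hBornA a, comp_sum', ← hop]
      simp only [step2]
      rw [Finset.sum_eq_single b]
      · simp
      · intro c _ hc; simp [Pi.single_eq_of_ne hc]
      · simp
    have h2 := congrArg LinearMap.adjoint h1
    rwa [LinearMap.adjoint_adjoint, LinearMap.adjoint_comp, adjoint_proj', adjoint_proj'] at h2
  · intro hS ρ _ _ _ X f
    have hcomp : ∀ q : ιA × ιB, opF (fun b => φB b) f ∘ₗ LinearMap.adjoint (S q)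
        = f q.2 • LinearMap.adjoint (S q) := by
      intro q
      rw [hS q, LinearMap.adjoint_comp, adjoint_proj', adjoint_proj']
      ext x
      simp only [LinearMap.comp_apply, LinearMap.smul_apply, proj_apply' (φB q.2), map_smul,
        opF_apply']
      rw [smul_comm]
    have hT : ∀ p, LinearMap.trace ℂ H (T p ∘ₗ (opF (fun b => φB b) f ∘ₗ X)) =
        f p.2 * LinearMap.trace ℂ H (T p ∘ₗ X) := by
      intro p
      refine hext
        (LinearMap.trace ℂ H ∘ₗ LinearMap.mulLeft ℂ (T p * opF (fun b => φB b) f : H →ₗ[ℂ] H))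
        (f p.2 • (LinearMap.trace ℂ H ∘ₗ LinearMap.mulLeft ℂ (T p : H →ₗ[ℂ] H))) ?_ X
      intro q
      change LinearMap.trace ℂ H (T p ∘ₗ (opF (fun b => φB b) f ∘ₗ LinearMap.adjoint (S q))) =
        f p.2 * LinearMap.trace ℂ H (T p ∘ₗ LinearMap.adjoint (S q))
      rw [hcomp, LinearMap.comp_smul, map_smul, hdual, smul_eq_mul]
      split_ifs with hpq
      · rw [hpq]
      · simp
    apply φB.toBasis.ext
    intro b
    rw [OrthonormalBasis.coe_toBasis, LinearMap.comp_apply, Q_apply', Q_apply', map_smul,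
      opF_apply', smul_smul, Finset.sum_mul]
    congr 1
    refine Finset.sum_congr rfl fun a _ => ?_
    rw [hT]
    ring
end
end
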